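/- Let n ≥ 5, p ≥ 1 and 1 < s < n/(n−4). Let U = (u_1, …, u_p) be a nonnegative superharmonic C⁴ solution of Δ² u_i = |U|^{s−1} u_i on the punctured unit ball B₁ \ {0} ⊂ ℝ^n. If |U(x)| = o(|x|^{4−n}) as x → 0 (i.e., lim_{x→0} |x|^{n−4} |U(x)| = 0), then the origin is a removable singularity: U extends to a continuous function on all of B₁. -/

import Mathlib

open MeasureTheory Metric Filter Topology

/-- The Euclidean Laplacian: sum of second partial derivatives. -/
noncomputable def lap {n : ℕ} (u : EuclideanSpace ℝ (Fin n) → ℝ)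
    (x : EuclideanSpace ℝ (Fin n)) : ℝ :=
  ∑ i : Fin n,
    fderiv ℝ (fun y => fderiv ℝ u y (EuclideanSpace.single i 1)) x
      (EuclideanSpace.single i 1)

/-- The bi-Laplacian Δ² = Δ ∘ Δ. -/
noncomputable def bilap {n : ℕ} (u : EuclideanSpace ℝ (Fin n) → ℝ) :
    EuclideanSpace ℝ (Fin n) → ℝ :=
  lap (lap u)

/-- The pointwise Euclidean norm |U(x)| of a p-map U. -/
noncomputable def vnorm {n p : ℕ} (U : Fin p → EuclideanSpace ℝ (Fin n) → ℝ)
    (x : EuclideanSpace ℝ (Fin n)) : ℝ :=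
  Real.sqrt (∑ i, U i x ^ 2)

noncomputable def pd {n : ℕ} (i : Fin n) (u : EuclideanSpace ℝ (Fin n) → ℝ)
    (x : EuclideanSpace ℝ (Fin n)) : ℝ :=
  fderiv ℝ u x (EuclideanSpace.single i 1)

lemma lap_eq {n : ℕ} (u : EuclideanSpace ℝ (Fin n) → ℝ) (x : EuclideanSpace ℝ (Fin n)) :
    lap u x = ∑ i, pd i (pd i u) x := rfl

lemma pd_congr {n : ℕ} (i : Fin n) {u v : EuclideanSpace ℝ (Fin n) → ℝ}
    {x : EuclideanSpace ℝ (Fin n)} (h : u =ᶠ[𝓝 x] v) : pd i u x = pd i v x := by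
  unfold pd; rw [h.fderiv_eq]

lemma pd_congr' {n : ℕ} (i : Fin n) {u v : EuclideanSpace ℝ (Fin n) → ℝ}
    {x : EuclideanSpace ℝ (Fin n)} (h : u =ᶠ[𝓝 x] v) : pd i u =ᶠ[𝓝 x] pd i v := by
  filter_upwards [h.eventuallyEq_nhds] with y hy using pd_congr i hy

lemma lap_congr {n : ℕ} {u v : EuclideanSpace ℝ (Fin n) → ℝ}
    {x : EuclideanSpace ℝ (Fin n)} (h : u =ᶠ[𝓝 x] v) : lap u x = lap v x := by
  rw [lap_eq, lap_eq]
  exact Finset.sum_congr rfl fun i _ => pd_congr i (pd_congr' i h)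

lemma pd_contDiffAt {n : ℕ} (i : Fin n) {u : EuclideanSpace ℝ (Fin n) → ℝ}
    {x : EuclideanSpace ℝ (Fin n)} {k m : WithTop ℕ∞} (h : ContDiffAt ℝ m u x) (hk : k + 1 ≤ m) :
    ContDiffAt ℝ k (pd i u) x := by
  have := h.fderiv_right hk
  exact this.clm_apply contDiffAt_const

lemma lap_contDiffAt {n : ℕ} {u : EuclideanSpace ℝ (Fin n) → ℝ}
    {x : EuclideanSpace ℝ (Fin n)} (h : ContDiffAt ℝ 4 u x) : ContDiffAt ℝ 2 (lap u) x := by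
  have : lap u = fun y => ∑ i, pd i (pd i u) y := rfl
  rw [this]
  refine ContDiffAt.sum fun i _ => ?_
  exact pd_contDiffAt i (pd_contDiffAt (k := 3) i h (by norm_num)) (by norm_num)

lemma c2_diff {n : ℕ} {u : EuclideanSpace ℝ (Fin n) → ℝ}
    {x : EuclideanSpace ℝ (Fin n)} (h : ContDiffAt ℝ 2 u x) : DifferentiableAt ℝ u x :=
  h.differentiableAt (by norm_num)

lemma c2_ev {n : ℕ} {u : EuclideanSpace ℝ (Fin n) → ℝ}
    {x : EuclideanSpace ℝ (Fin n)} (h : ContDiffAt ℝ 2 u x) :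
    ∀ᶠ y in 𝓝 x, DifferentiableAt ℝ u y := by
  filter_upwards [h.eventually (by norm_num)] with y hy using c2_diff hy

lemma c2_pd {n : ℕ} (i : Fin n) {u : EuclideanSpace ℝ (Fin n) → ℝ}
    {x : EuclideanSpace ℝ (Fin n)} (h : ContDiffAt ℝ 2 u x) : DifferentiableAt ℝ (pd i u) x :=
  (pd_contDiffAt (k := 1) i h (by norm_num)).differentiableAt (by norm_num)

lemma pd_add {n : ℕ} (i : Fin n) {u v : EuclideanSpace ℝ (Fin n) → ℝ}
    {x : EuclideanSpace ℝ (Fin n)} (hu : DifferentiableAt ℝ u x) (hv : DifferentiableAt ℝ v x) :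
    pd i (fun y => u y + v y) x = pd i u x + pd i v x := by
  unfold pd; rw [fderiv_fun_add hu hv]; rfl

lemma pd_const_mul {n : ℕ} (i : Fin n) {u : EuclideanSpace ℝ (Fin n) → ℝ}
    {x : EuclideanSpace ℝ (Fin n)} (hu : DifferentiableAt ℝ u x) (c : ℝ) :
    pd i (fun y => c * u y) x = c * pd i u x := by
  unfold pd; rw [fderiv_const_mul hu]; rfl

lemma pd_mul {n : ℕ} (i : Fin n) {u v : EuclideanSpace ℝ (Fin n) → ℝ}
    {x : EuclideanSpace ℝ (Fin n)} (hu : DifferentiableAt ℝ u x) (hv : DifferentiableAt ℝ v x) :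
    pd i (fun y => u y * v y) x = u x * pd i v x + v x * pd i u x := by
  unfold pd; rw [fderiv_fun_mul hu hv]; simp

lemma pd_comp {n : ℕ} (i : Fin n) {u : EuclideanSpace ℝ (Fin n) → ℝ}
    {x : EuclideanSpace ℝ (Fin n)} (hu : DifferentiableAt ℝ u x) {h : ℝ → ℝ} {h' : ℝ}
    (hh : HasDerivAt h h' (u x)) :
    pd i (fun y => h (u y)) x = h' * pd i u x := by
  unfold pd
  have := (hh.comp_hasFDerivAt x hu.hasFDerivAt).fderiv
  simp only [Function.comp_def] at this
  rw [this]; simp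

lemma lap_add {n : ℕ} {u v : EuclideanSpace ℝ (Fin n) → ℝ}
    {x : EuclideanSpace ℝ (Fin n)} (hu : ContDiffAt ℝ 2 u x) (hv : ContDiffAt ℝ 2 v x) :
    lap (fun y => u y + v y) x = lap u x + lap v x := by
  simp only [lap_eq, ← Finset.sum_add_distrib]
  refine Finset.sum_congr rfl fun i _ => ?_
  rw [← pd_add i (c2_pd i hu) (c2_pd i hv)]
  refine pd_congr i ?_
  filter_upwards [c2_ev hu, c2_ev hv] with y h1 h2 using pd_add i h1 h2

lemma lap_const_mul {n : ℕ} {u : EuclideanSpace ℝ (Fin n) → ℝ}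
    {x : EuclideanSpace ℝ (Fin n)} (hu : ContDiffAt ℝ 2 u x) (c : ℝ) :
    lap (fun y => c * u y) x = c * lap u x := by
  simp only [lap_eq, Finset.mul_sum]
  refine Finset.sum_congr rfl fun i _ => ?_
  rw [← pd_const_mul i (c2_pd i hu)]
  refine pd_congr i ?_
  filter_upwards [c2_ev hu] with y h1 using pd_const_mul i h1 c

lemma lap_mul {n : ℕ} {u v : EuclideanSpace ℝ (Fin n) → ℝ}
    {x : EuclideanSpace ℝ (Fin n)} (hu : ContDiffAt ℝ 2 u x) (hv : ContDiffAt ℝ 2 v x) :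
    lap (fun y => u y * v y) x
      = u x * lap v x + 2 * (∑ i, pd i u x * pd i v x) + v x * lap u x := by
  simp only [lap_eq, Finset.mul_sum, ← Finset.sum_add_distrib]
  refine Finset.sum_congr rfl fun i _ => ?_
  have : pd i (fun y => u y * v y) =ᶠ[𝓝 x] fun y => u y * pd i v y + v y * pd i u y := by
    filter_upwards [c2_ev hu, c2_ev hv] with y h1 h2 using pd_mul i h1 h2
  rw [pd_congr i this, pd_add i ((c2_diff hu).fun_mul (c2_pd i hv)) ((c2_diff hv).fun_mul (c2_pd i hu)),
    pd_mul i (c2_diff hu) (c2_pd i hv), pd_mul i (c2_diff hv) (c2_pd i hu)]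
  ring

lemma lap_comp {n : ℕ} {u : EuclideanSpace ℝ (Fin n) → ℝ}
    {x : EuclideanSpace ℝ (Fin n)} (hu : ContDiffAt ℝ 2 u x) {h h' : ℝ → ℝ} {h'' : ℝ}
    (hh : ∀ᶠ t in 𝓝 (u x), HasDerivAt h (h' t) t) (hh' : HasDerivAt h' h'' (u x)) :
    lap (fun y => h (u y)) x = h' (u x) * lap u x + h'' * ∑ i, pd i u x ^ 2 := by
  simp only [lap_eq, Finset.mul_sum, ← Finset.sum_add_distrib]
  refine Finset.sum_congr rfl fun i _ => ?_
  have : pd i (fun y => h (u y)) =ᶠ[𝓝 x] fun y => h' (u y) * pd i u y := by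
    filter_upwards [c2_ev hu, hu.continuousAt.eventually hh] with y h1 h2 using pd_comp i h1 h2
  have hd : DifferentiableAt ℝ (fun y => h' (u y)) x :=
    (hh'.comp_hasFDerivAt x (c2_diff hu).hasFDerivAt).differentiableAt
  rw [pd_congr i this, pd_mul i hd (c2_pd i hu), pd_comp i (c2_diff hu) hh']
  ring

lemma pd_translate {n : ℕ} (i : Fin n) (u : EuclideanSpace ℝ (Fin n) → ℝ)
    (e x : EuclideanSpace ℝ (Fin n)) : pd i (fun y => u (y + e)) x = pd i u (x + e) := by
  unfold pd; rw [fderiv_comp_add_right]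

lemma lap_translate {n : ℕ} (u : EuclideanSpace ℝ (Fin n) → ℝ)
    (e x : EuclideanSpace ℝ (Fin n)) : lap (fun y => u (y + e)) x = lap u (x + e) := by
  simp only [lap_eq]
  refine Finset.sum_congr rfl fun i _ => ?_
  rw [← pd_translate]
  congr 1
  funext y
  exact pd_translate i u e y

/-- squared distance to `a` -/
noncomputable def sqd {n : ℕ} (a x : EuclideanSpace ℝ (Fin n)) : ℝ := ‖x - a‖ ^ 2

lemma sqd_contDiff {n : ℕ} (a : EuclideanSpace ℝ (Fin n)) : ContDiff ℝ 2 (sqd a) :=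
  (contDiff_id.sub contDiff_const).norm_sq ℝ

lemma pd_sqd {n : ℕ} (i : Fin n) (a x : EuclideanSpace ℝ (Fin n)) :
    pd i (sqd a) x = 2 * (x i - a i) := by
  have h : HasFDerivAt (sqd a) (2 • (innerSL ℝ (x - a)).comp
      (ContinuousLinearMap.id ℝ (EuclideanSpace ℝ (Fin n)))) x :=
    ((hasFDerivAt_id x).sub_const a).norm_sq
  unfold pd
  rw [h.fderiv]
  simp [EuclideanSpace.inner_single_right, mul_sub]

lemma pd_coord {n : ℕ} (i : Fin n) (a x : EuclideanSpace ℝ (Fin n)) :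
    pd i (fun y => 2 * (y i - a i)) x = 2 := by
  have h : HasFDerivAt (fun y : EuclideanSpace ℝ (Fin n) => 2 * (y i - a i))
      ((2:ℝ) • (EuclideanSpace.proj i : EuclideanSpace ℝ (Fin n) →L[ℝ] ℝ)) x :=
    (((EuclideanSpace.proj i : EuclideanSpace ℝ (Fin n) →L[ℝ] ℝ).hasFDerivAt).sub_const
      (a i)).const_mul 2
  unfold pd
  rw [h.fderiv]
  simp

lemma lap_sqd {n : ℕ} (a x : EuclideanSpace ℝ (Fin n)) : lap (sqd a) x = 2 * n := by
  rw [lap_eq]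
  have : ∀ i, pd i (pd i (sqd a)) x = 2 := fun i => by
    rw [show pd i (sqd a) = fun y => 2 * (y i - a i) from funext fun y => pd_sqd i a y, pd_coord]
  simp [this, mul_comm]

lemma sqd_eq_sum {n : ℕ} (a x : EuclideanSpace ℝ (Fin n)) :
    sqd a x = ∑ i, (x i - a i) ^ 2 := by
  simp [sqd, EuclideanSpace.norm_sq_eq]

lemma sum_pd_sqd {n : ℕ} (a x : EuclideanSpace ℝ (Fin n)) :
    ∑ i, pd i (sqd a) x ^ 2 = 4 * sqd a x := by
  rw [sqd_eq_sum, Finset.mul_sum]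
  refine Finset.sum_congr rfl fun i _ => ?_
  rw [pd_sqd]; ring

lemma norm_rpow_eq {n : ℕ} (a x : EuclideanSpace ℝ (Fin n)) (γ : ℝ) :
    ‖x - a‖ ^ γ = (sqd a x) ^ (γ / 2) := by
  rw [sqd, ← Real.rpow_natCast, ← Real.rpow_mul (norm_nonneg _)]
  congr 1; push_cast; ring

lemma sqd_pos {n : ℕ} {a x : EuclideanSpace ℝ (Fin n)} (h : x ≠ a) : 0 < sqd a x := by
  have := norm_pos_iff.2 (sub_ne_zero.2 h)
  unfold sqd; positivity

lemma npow_contDiffAt {n : ℕ} {a x : EuclideanSpace ℝ (Fin n)} (h : x ≠ a) (γ : ℝ) :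
    ContDiffAt ℝ 2 (fun y => ‖y - a‖ ^ γ) x := by
  simp_rw [norm_rpow_eq]
  exact (sqd_contDiff a).contDiffAt.rpow_const_of_ne (sqd_pos h).ne'

lemma lap_npow {n : ℕ} {a x : EuclideanSpace ℝ (Fin n)} (h : x ≠ a) (γ : ℝ) :
    lap (fun y => ‖y - a‖ ^ γ) x = γ * (γ + n - 2) * ‖x - a‖ ^ (γ - 2) := by
  have hp := sqd_pos h
  simp_rw [norm_rpow_eq]
  rw [lap_comp (h := fun t => t ^ (γ / 2)) (h' := fun t => (γ / 2) * t ^ (γ / 2 - 1))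
    (h'' := (γ / 2) * ((γ / 2 - 1) * sqd a x ^ (γ / 2 - 1 - 1)))
    (sqd_contDiff a).contDiffAt, lap_sqd, sum_pd_sqd]
  · have : sqd a x ^ (γ / 2 - 1 - 1) * sqd a x = sqd a x ^ (γ / 2 - 1) := by
      rw [Real.rpow_sub_one hp.ne' (γ / 2 - 1)]; field_simp
    rw [show (γ - 2) / 2 = γ / 2 - 1 by ring]
    linear_combination (γ * (γ - 2)) * this
  · filter_upwards [lt_mem_nhds hp] with t ht
    exact Real.hasDerivAt_rpow_const (Or.inl ht.ne')
  · exact (Real.hasDerivAt_rpow_const (Or.inl hp.ne')).const_mul _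

lemma pd_localMax {n : ℕ} (i : Fin n) {u : EuclideanSpace ℝ (Fin n) → ℝ}
    {x : EuclideanSpace ℝ (Fin n)} (h : IsLocalMax u x) : pd i u x = 0 := by
  unfold pd; rw [h.fderiv_eq_zero]; rfl

lemma pdpd_localMax {n : ℕ} (i : Fin n) {u : EuclideanSpace ℝ (Fin n) → ℝ}
    {x : EuclideanSpace ℝ (Fin n)} (hu : ContDiffAt ℝ 2 u x) (h : IsLocalMax u x) :
    pd i (pd i u) x ≤ 0 := by
  by_contra! hpos
  set e : EuclideanSpace ℝ (Fin n) := EuclideanSpace.single i 1 with he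
  have hline : ∀ t : ℝ, HasDerivAt (fun t : ℝ => x + t • e) e t := fun t => by
    simpa using ((hasDerivAt_id t).smul_const e).const_add x
  have hc : Tendsto (fun t : ℝ => x + t • e) (𝓝 0) (𝓝 x) := by
    have := (hline 0).continuousAt.tendsto
    simpa using this
  have hd : ∀ {w : EuclideanSpace ℝ (Fin n) → ℝ} {t : ℝ}, DifferentiableAt ℝ w (x + t • e) →
      HasDerivAt (fun t : ℝ => w (x + t • e)) (pd i w (x + t • e)) t := fun {w t} hw =>
    hw.hasFDerivAt.comp_hasDerivAt t (hline t)
  have h1 : deriv (fun t : ℝ => u (x + t • e)) =ᶠ[𝓝 0] fun t => pd i u (x + t • e) := by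
    filter_upwards [hc.eventually (c2_ev hu)] with t ht using (hd ht).deriv
  have h2 : deriv (deriv (fun t : ℝ => u (x + t • e))) 0 = pd i (pd i u) x := by
    rw [h1.deriv_eq]
    have := (hd (w := pd i u) (t := 0) (by simpa using c2_pd i hu)).deriv
    simpa using this
  have h3 : deriv (fun t : ℝ => u (x + t • e)) 0 = 0 := by
    rw [h1.eq_of_nhds]; simpa using pd_localMax i h
  have hmin := isLocalMin_of_deriv_deriv_pos (by rw [h2]; exact hpos) h3
    (hd (w := u) (t := 0) (by simpa using c2_diff hu)).continuousAt
  have hmax : IsLocalMax (fun t : ℝ => u (x + t • e)) 0 := by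
    have := hc.eventually h
    simpa [IsLocalMax, IsMaxFilter] using this
  have hconst : (fun t : ℝ => u (x + t • e)) =ᶠ[𝓝 0] fun _ => u (x + (0:ℝ) • e) := by
    filter_upwards [hmin, hmax] with t a b using le_antisymm b a
  have : deriv (deriv (fun t : ℝ => u (x + t • e))) 0 = 0 := by
    rw [hconst.deriv.deriv_eq]; simp
  linarith

lemma lap_localMax {n : ℕ} {u : EuclideanSpace ℝ (Fin n) → ℝ}
    {x : EuclideanSpace ℝ (Fin n)} (hu : ContDiffAt ℝ 2 u x) (h : IsLocalMax u x) :
    lap u x ≤ 0 := by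
  rw [lap_eq]
  exact Finset.sum_nonpos fun i _ => pdpd_localMax i hu h

lemma ev_small {n : ℕ} (b : EuclideanSpace ℝ (Fin n)) {γ δ : ℝ} (h : δ < γ) (A : ℝ) {ε : ℝ}
    (hε : 0 < ε) :
    ∀ᶠ x in 𝓝[≠] b, A * ‖x - b‖ ^ γ ≤ ε * ‖x - b‖ ^ δ := by
  have h1 : Tendsto (fun x : EuclideanSpace ℝ (Fin n) => A * ‖x - b‖ ^ (γ - δ)) (𝓝[≠] b) (𝓝 0) := by
    have h2 : Tendsto (fun x : EuclideanSpace ℝ (Fin n) => ‖x - b‖) (𝓝[≠] b) (𝓝 0) := by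
      have : Continuous fun x : EuclideanSpace ℝ (Fin n) => ‖x - b‖ := by fun_prop
      have := this.tendsto b
      simp only [sub_self, norm_zero] at this
      exact this.mono_left nhdsWithin_le_nhds
    have h3 := (h2.rpow_const (p := γ - δ) (Or.inr (by linarith))).const_mul A
    rwa [Real.zero_rpow (by linarith), mul_zero] at h3
  filter_upwards [h1.eventually (gt_mem_nhds hε), self_mem_nhdsWithin] with x hx hxb
  have hp : 0 < ‖x - b‖ := norm_pos_iff.2 (sub_ne_zero.2 hxb)
  have : ‖x - b‖ ^ γ = ‖x - b‖ ^ (γ - δ) * ‖x - b‖ ^ δ := by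
    rw [← Real.rpow_add hp]; congr 1; ring
  rw [this, ← mul_assoc]
  exact mul_le_mul_of_nonneg_right hx.le (by positivity)

/-- maximum principle with two negligible singularities -/
lemma sing_max {n : ℕ} {R : ℝ} {b : EuclideanSpace ℝ (Fin n)}
    {w : EuclideanSpace ℝ (Fin n) → ℝ} {m : ℝ} (hm : 0 ≤ m)
    (hC : ∀ x, ‖x‖ ≤ R → x ≠ 0 → x ≠ b → ContDiffAt ℝ 2 w x)
    (hlap : ∀ x, ‖x‖ < R → x ≠ 0 → x ≠ b → 0 < lap w x)
    (hsph : ∀ x, ‖x‖ = R → x ≠ 0 → x ≠ b → w x ≤ m)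
    (h0 : ∀ ε > 0, ∀ᶠ x in 𝓝[≠] (0 : EuclideanSpace ℝ (Fin n)),
      w x ≤ ε * ‖x - 0‖ ^ (2 - n : ℝ))
    (hb : ∀ ε > 0, ∀ᶠ x in 𝓝[≠] b, w x ≤ ε * ‖x - b‖ ^ (2 - n : ℝ)) :
    ∀ x, ‖x‖ ≤ R → x ≠ 0 → x ≠ b → w x ≤ m := by
  intro x₀ hx₀ hx₀0 hx₀b
  by_contra! hlt
  set Φ : EuclideanSpace ℝ (Fin n) → ℝ :=
    fun x => ‖x - 0‖ ^ (2 - n : ℝ) + ‖x - b‖ ^ (2 - n : ℝ) with hΦ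
  have hΦnn : ∀ x, 0 ≤ Φ x := fun x => by positivity
  have hΦC : ∀ x, x ≠ 0 → x ≠ b → ContDiffAt ℝ 2 Φ x := fun x h1 h2 =>
    (npow_contDiffAt h1 _).add (npow_contDiffAt h2 _)
  have hΦlap : ∀ x, x ≠ 0 → x ≠ b → lap Φ x = 0 := fun x h1 h2 => by
    rw [hΦ, lap_add (npow_contDiffAt h1 _) (npow_contDiffAt h2 _), lap_npow h1, lap_npow h2]
    ring
  obtain ⟨ε, hε, hεx⟩ : ∃ ε > 0, m < w x₀ - ε * Φ x₀ := by
    refine ⟨(w x₀ - m) / (2 * (Φ x₀ + 1)), ?_, ?_⟩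
    · have := hΦnn x₀
      have : 0 < w x₀ - m := by linarith
      positivity
    · have h1 := hΦnn x₀
      have : (w x₀ - m) / (2 * (Φ x₀ + 1)) * Φ x₀ < w x₀ - m := by
        rw [div_mul_eq_mul_div, div_lt_iff₀ (by positivity)]
        nlinarith
      linarith
  set ψ : EuclideanSpace ℝ (Fin n) → ℝ := fun x => w x + (-ε) * Φ x with hψ
  have hψx₀ : m < ψ x₀ := by simp only [hψ]; linarith
  have hψC : ∀ x, ‖x‖ ≤ R → x ≠ 0 → x ≠ b → ContDiffAt ℝ 2 ψ x := fun x h h1 h2 =>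
    (hC x h h1 h2).add (contDiffAt_const.mul (hΦC x h1 h2))
  have hψlap : ∀ x, ‖x‖ < R → x ≠ 0 → x ≠ b → 0 < lap ψ x := fun x h h1 h2 => by
    rw [hψ, lap_add (hC x h.le h1 h2) (contDiffAt_const.mul (hΦC x h1 h2)),
      lap_const_mul (hΦC x h1 h2), hΦlap x h1 h2]
    simpa using hlap x h h1 h2
  obtain ⟨δ, hδ, h0δ, hbδ⟩ : ∃ δ > 0, (∀ x, ‖x‖ < δ → x ≠ 0 → x ≠ b → ψ x ≤ m) ∧
      (∀ x, dist x b < δ → x ≠ 0 → x ≠ b → ψ x ≤ m) := by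
    have e0 := h0 ε hε
    have eb := hb ε hε
    rw [eventually_nhdsWithin_iff, Metric.eventually_nhds_iff] at e0 eb
    obtain ⟨δ₁, hδ₁, H1⟩ := e0
    obtain ⟨δ₂, hδ₂, H2⟩ := eb
    refine ⟨min δ₁ δ₂, lt_min hδ₁ hδ₂, fun x hx hx0 hxb => ?_, fun x hx hx0 hxb => ?_⟩
    · have := H1 (y := x) (by simpa using hx.trans_le (min_le_left _ _)) hx0
      have h3 : 0 ≤ ε * ‖x - b‖ ^ (2 - n : ℝ) := by positivity
      simp only [hψ, hΦ]; linarith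
    · have := H2 (y := x) (hx.trans_le (min_le_right _ _)) hxb
      have h3 : 0 ≤ ε * ‖x - 0‖ ^ (2 - n : ℝ) := by positivity
      simp only [hψ, hΦ]; linarith
  set K : Set (EuclideanSpace ℝ (Fin n)) := closedBall 0 R \ (ball 0 δ ∪ ball b δ) with hK
  have hKc : IsCompact K := (isCompact_closedBall 0 R).diff (isOpen_ball.union isOpen_ball)
  have hKne : ∀ x ∈ K, ‖x‖ ≤ R ∧ x ≠ 0 ∧ x ≠ b := by
    rintro x ⟨h1, h2⟩
    refine ⟨by simpa using h1, ?_, ?_⟩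
    · rintro rfl; exact h2 (Or.inl (by simpa using hδ))
    · rintro rfl; exact h2 (Or.inr (by simpa using hδ))
  have hKin : ∀ x, ‖x‖ ≤ R → x ≠ 0 → x ≠ b → m < ψ x → x ∈ K := by
    intro x h1 h2 h3 h4
    refine ⟨by simpa using h1, ?_⟩
    rintro (h | h)
    · exact absurd (h0δ x (by simpa using h) h2 h3) (not_le.2 h4)
    · exact absurd (hbδ x (by simpa using h) h2 h3) (not_le.2 h4)
  have hψcont : ContinuousOn ψ K := fun x hx => by
    obtain ⟨h1, h2, h3⟩ := hKne x hx
    exact (hψC x h1 h2 h3).continuousAt.continuousWithinAt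
  have hx₀K := hKin x₀ hx₀ hx₀0 hx₀b hψx₀
  obtain ⟨z, hzK, hz⟩ := hKc.exists_isMaxOn ⟨x₀, hx₀K⟩ hψcont
  obtain ⟨hz1, hz2, hz3⟩ := hKne z hzK
  have hψz : m < ψ z := hψx₀.trans_le (hz hx₀K)
  have hzR : ‖z‖ < R := by
    refine lt_of_le_of_ne hz1 fun h => ?_
    have := hsph z h hz2 hz3
    have h4 := mul_nonneg hε.le (hΦnn z)
    simp only [hψ] at hψz
    linarith
  have hloc : IsLocalMax ψ z := by
    have o1 : ∀ᶠ y in 𝓝 z, ‖y‖ < R := continuous_norm.continuousAt.eventually (gt_mem_nhds hzR)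
    filter_upwards [o1, isOpen_ne.mem_nhds hz2, isOpen_ne.mem_nhds hz3] with y h1 h2 h3
    by_cases hy : m < ψ y
    · exact hz (hKin y h1.le h2 h3 hy)
    · linarith
  have := lap_localMax (hψC z hz1 hz2 hz3) hloc
  linarith [hψlap z hzR hz2 hz3]

/-- comparison with a power barrier -/
lemma compare {n : ℕ} {w : EuclideanSpace ℝ (Fin n) → ℝ} {R M γ : ℝ}
    (hC : ∀ x, ‖x‖ ≤ R → x ≠ 0 → ContDiffAt ℝ 2 w x)
    (hw : ∀ x, ‖x‖ < R → x ≠ 0 → -lap w x ≤ M * ‖x‖ ^ (γ - 2))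
    (h0 : ∀ ε > 0, ∀ᶠ x in 𝓝[≠] (0 : EuclideanSpace ℝ (Fin n)),
      w x ≤ ε * ‖x‖ ^ (2 - n : ℝ)) (hR : 0 < R)
    (hγ : 2 - n < γ) (hγ0 : γ ≠ 0) :
    ∃ m, 0 ≤ m ∧ ∀ x, ‖x‖ ≤ R → x ≠ 0 →
      w x ≤ m + (M + 1) / (-(γ * (γ + n - 2))) * ‖x‖ ^ γ := by
  set c := -(γ * (γ + n - 2)) with hc
  have hc0 : c ≠ 0 := by
    rw [hc, neg_ne_zero]; exact mul_ne_zero hγ0 (by linarith)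
  set A := (M + 1) / c with hA
  set W : EuclideanSpace ℝ (Fin n) → ℝ := fun x => w x + (-A) * ‖x - 0‖ ^ γ with hW
  have hWC : ∀ x, ‖x‖ ≤ R → x ≠ 0 → ContDiffAt ℝ 2 W x := fun x h1 h2 =>
    (hC x h1 h2).add (contDiffAt_const.mul (npow_contDiffAt h2 γ))
  obtain ⟨m, hm⟩ : ∃ m, ∀ x ∈ sphere (0 : EuclideanSpace ℝ (Fin n)) R, W x ≤ m := by
    have : ContinuousOn W (sphere 0 R) := fun x hx => by
      have hx' : ‖x‖ = R := by simpa using hx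
      refine (hWC x hx'.le ?_).continuousAt.continuousWithinAt
      rintro rfl; simp at hx'; linarith
    obtain ⟨m, hm⟩ := (isCompact_sphere 0 R).bddAbove_image this
    exact ⟨m, fun x hx => hm ⟨x, hx, rfl⟩⟩
  refine ⟨max m 0, le_max_right _ _, fun x hx hx0 => ?_⟩
  have hsing : ∀ ε > 0, ∀ᶠ x in 𝓝[≠] (0 : EuclideanSpace ℝ (Fin n)),
      W x ≤ ε * ‖x - 0‖ ^ (2 - n : ℝ) := by
    intro ε hε
    filter_upwards [h0 (ε / 2) (by positivity), ev_small 0 hγ (-A) (half_pos hε)] with y h1 h2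
    simp only [sub_zero] at h1 h2 ⊢
    simp only [hW, sub_zero]
    linarith
  have key := sing_max (R := R) (b := 0) (w := W) (m := max m 0) (le_max_right _ _)
    (fun x h1 h2 _ => hWC x h1 h2) ?_ (fun x h1 _ _ => (hm x (by simpa using h1)).trans
      (le_max_left _ _)) hsing hsing x hx hx0 hx0
  · simp only [hW, sub_zero] at key
    linarith
  · intro x h1 h2 _
    rw [hW, lap_add (hC x h1.le h2) (contDiffAt_const.mul (npow_contDiffAt h2 γ)),
      lap_const_mul (npow_contDiffAt h2 γ), lap_npow h2]
    have h3 := hw x h1 h2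
    have h4 : 0 < ‖x‖ ^ (γ - 2) := Real.rpow_pos_of_pos (norm_pos_iff.2 h2) _
    have h5 : -A * (γ * (γ + n - 2) * ‖x - 0‖ ^ (γ - 2)) = (M + 1) * ‖x‖ ^ (γ - 2) := by
      rw [sub_zero, show γ * (γ + n - 2) = -c by rw [hc]; ring, hA]; field_simp
    rw [h5]; linarith

/-- the scalar inequality behind the interior estimate -/
lemma int_alg {φ v f q r N K L u M0 M1 A B H k : ℝ}
    (hφ : 0 < φ) (hφr : φ ≤ r ^ 2) (hq : 0 ≤ q) (hqr : q ≤ r ^ 2) (hr : 0 < r)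
    (hN : 0 ≤ N) (hk : k = 16 * N + 128) (hK : K = k * r ^ 2) (hM0 : 0 < M0)
    (hL : L = K / (4 * M0)) (hv : 0 ≤ v) (hu : 0 ≤ u) (huM : u ≤ M0) (hf : f ≤ M1)
    (hM1 : 0 ≤ M1)
    (hA : φ ^ 2 * A = 4 * φ * v * q + (K - 2 * L * u) * B)
    (hS : 0 ≤ 2 * L * H - 8 * ((K - 2 * L * u) / φ) * B
      + 8 * (K - 2 * L * u) ^ 2 * q / (L * φ ^ 2))
    (hlap : φ ^ 2 * (-f) - 8 * φ * A + v * (-4 * N * φ + 8 * q)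
      + (2 * L * u - K) * (-v) + 2 * L * H ≤ 0) :
    φ ^ 2 * v ≤ 128 * r ^ 2 * M0 + r ^ 6 * M1 := by
  have hkpos : 0 < k := by rw [hk]; positivity
  have hKpos : 0 < K := by rw [hK]; positivity
  have hLpos : 0 < L := by rw [hL]; positivity
  set T := K - 2 * L * u with hT
  have hLu : L * u ≤ K / 4 := by
    calc L * u ≤ L * M0 := by gcongr
      _ = K / 4 := by rw [hL]; field_simp
  have hLu0 : 0 ≤ L * u := by positivity
  have hT1 : K / 2 ≤ T := by rw [hT]; linarith
  have hT2 : T ≤ K := by rw [hT]; linarith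
  have e1 : 8 * φ * A = 32 * v * q + 8 * (T / φ) * B := by
    have : φ * (8 * φ * A) = φ * (32 * v * q + 8 * (T / φ) * B) := by
      have : φ * (T / φ) = T := by field_simp
      linear_combination 8 * hA - 8 * B * this
    exact mul_left_cancel₀ hφ.ne' this
  have e2 : 8 * T ^ 2 * q / (L * φ ^ 2) * φ ^ 2 ≤ 32 * K * M0 * r ^ 2 := by
    have : 8 * T ^ 2 * q / (L * φ ^ 2) * φ ^ 2 = 8 * T ^ 2 * q / L := by field_simp
    rw [this, div_le_iff₀ hLpos]
    have h2 : 32 * K * M0 * r ^ 2 * L = 8 * K ^ 2 * r ^ 2 := by rw [hL]; field_simp; ring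
    rw [h2]
    have : 0 ≤ T := by linarith
    gcongr
  -- combine
  have e3 : (K / 2 - (4 * N + 32) * r ^ 2) * v - φ ^ 2 * f
      - 8 * T ^ 2 * q / (L * φ ^ 2) ≤ 0 := by
    have a1 : K / 2 * v ≤ T * v := by gcongr
    have a2 : 4 * N * φ * v ≤ 4 * N * r ^ 2 * v := by gcongr
    have a3 : q * v ≤ r ^ 2 * v := by gcongr
    have a4 : 0 ≤ q * v := by positivity
    nlinarith
  have e4 : K / 2 - (4 * N + 32) * r ^ 2 = k / 4 * r ^ 2 := by rw [hK, hk]; ring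
  rw [e4] at e3
  have e5 : φ ^ 2 * f ≤ r ^ 4 * M1 := by
    calc φ ^ 2 * f ≤ φ ^ 2 * M1 := by gcongr
      _ ≤ (r ^ 2) ^ 2 * M1 := by gcongr
      _ = r ^ 4 * M1 := by ring
  have e6 : (k / 4 * r ^ 2 * v) * φ ^ 2 ≤ r ^ 8 * M1 + 32 * K * M0 * r ^ 2 := by
    have b1 : k / 4 * r ^ 2 * v * φ ^ 2 ≤ (r ^ 4 * M1 + 8 * T ^ 2 * q / (L * φ ^ 2)) * φ ^ 2 := by
      gcongr; linarith
    have b2 : r ^ 4 * M1 * φ ^ 2 ≤ r ^ 4 * M1 * (r ^ 2) ^ 2 := by gcongr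
    nlinarith
  have hk4 : 1 ≤ k / 4 := by rw [hk]; linarith
  have e7 : (k / 4 * r ^ 2) * (φ ^ 2 * v) ≤
      (k / 4 * r ^ 2) * (128 * r ^ 2 * M0 + r ^ 6 * M1) := by
    have c1 : r ^ 8 * M1 ≤ k / 4 * (r ^ 8 * M1) := le_mul_of_one_le_left (by positivity) hk4
    rw [hK] at e6
    nlinarith
  exact le_of_mul_le_mul_left e7 (by positivity)

/-- interior estimate for `-Δ u` -/
lemma interior_est {n : ℕ} {u : EuclideanSpace ℝ (Fin n) → ℝ} {a : EuclideanSpace ℝ (Fin n)}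
    {r M0 M1 : ℝ} (hr : 0 < r) (hM0 : 0 < M0) (hM1 : 0 ≤ M1)
    (hC : ∀ x ∈ closedBall a r, ContDiffAt ℝ 4 u x)
    (hu : ∀ x ∈ closedBall a r, 0 ≤ u x) (huM : ∀ x ∈ closedBall a r, u x ≤ M0)
    (hv : ∀ x ∈ closedBall a r, 0 ≤ -lap u x)
    (hf : ∀ x ∈ closedBall a r, lap (lap u) x ≤ M1) :
    -lap u a ≤ (16 * n + 256) * M0 / r ^ 2 + r ^ 2 * M1 := by
  obtain ⟨k, hk⟩ : ∃ k : ℝ, k = 16 * n + 128 := ⟨_, rfl⟩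
  obtain ⟨K, hK⟩ : ∃ K : ℝ, K = k * r ^ 2 := ⟨_, rfl⟩
  obtain ⟨L, hL⟩ : ∃ L : ℝ, L = K / (4 * M0) := ⟨_, rfl⟩
  have hkpos : 0 < k := by rw [hk]; positivity
  have hKpos : 0 < K := by rw [hK]; positivity
  have hLpos : 0 < L := by rw [hL]; positivity
  have hLu : ∀ x ∈ closedBall a r, L * u x ≤ K := fun x hx => by
    calc L * u x ≤ L * M0 := by gcongr; exact huM x hx
      _ = K / 4 := by rw [hL]; field_simp
      _ ≤ K := by linarith
  set φ2 : EuclideanSpace ℝ (Fin n) → ℝ := fun x => (r ^ 2 - sqd a x) ^ 2 with hφ2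
  set v : EuclideanSpace ℝ (Fin n) → ℝ := fun x => (-1) * lap u x with hvdef
  set G : EuclideanSpace ℝ (Fin n) → ℝ := fun x => L * u x ^ 2 - K * u x with hG
  set P : EuclideanSpace ℝ (Fin n) → ℝ := fun x => φ2 x * v x + G x with hP
  have hφC : ContDiff ℝ 2 φ2 := (contDiff_const.sub (sqd_contDiff a)).pow 2
  have huC : ∀ x ∈ closedBall a r, ContDiffAt ℝ 2 u x := fun x hx =>
    (hC x hx).of_le (by norm_num)
  have hvC : ∀ x ∈ closedBall a r, ContDiffAt ℝ 2 v x := fun x hx =>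
    contDiffAt_const.mul (lap_contDiffAt (hC x hx))
  have hGC : ∀ x ∈ closedBall a r, ContDiffAt ℝ 2 G x := fun x hx =>
    (contDiffAt_const.mul ((huC x hx).pow 2)).sub (contDiffAt_const.mul (huC x hx))
  have hPC : ∀ x ∈ closedBall a r, ContDiffAt ℝ 2 P x := fun x hx =>
    (hφC.contDiffAt.mul (hvC x hx)).add (hGC x hx)
  have hcont : ContinuousOn P (closedBall a r) := fun x hx =>
    (hPC x hx).continuousAt.continuousWithinAt
  have ha : a ∈ closedBall a r := mem_closedBall_self hr.le
  obtain ⟨z, hz, hzmax⟩ := (isCompact_closedBall a r).exists_isMaxOn ⟨a, ha⟩ hcont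
  have hG0 : ∀ x ∈ closedBall a r, G x ≤ 0 := fun x hx => by
    have h1 := hLu x hx
    have h2 := hu x hx
    simp only [hG]; nlinarith
  -- bound at the maximum
  have hPz : P z ≤ 128 * r ^ 2 * M0 + r ^ 6 * M1 := by
    have hq : sqd a z ≤ r ^ 2 := by
      have : ‖z - a‖ ≤ r := by simpa [dist_eq_norm] using hz
      unfold sqd; gcongr
    suffices h : φ2 z * v z ≤ 128 * r ^ 2 * M0 + r ^ 6 * M1 by
      have := hG0 z hz
      simp only [hP]; linarith
    rcases hq.eq_or_lt with hq' | hq'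
    · have : φ2 z = 0 := by simp [hφ2, hq']
      rw [this, zero_mul]; positivity
    have hzin : z ∈ ball a r := by
      have : ‖z - a‖ < r := by
        unfold sqd at hq'
        exact lt_of_pow_lt_pow_left₀ 2 hr.le hq'
      simpa [dist_eq_norm] using this
    have hloc : IsLocalMax P z := hzmax.isLocalMax (closedBall_mem_nhds_of_mem hzin)
    have hq0 : 0 ≤ sqd a z := by unfold sqd; positivity
    set φ := r ^ 2 - sqd a z with hφ
    have hder : ∀ t : ℝ, HasDerivAt (fun t : ℝ => (r ^ 2 - t) ^ 2) (-2 * (r ^ 2 - t)) t := fun t => by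
      have := ((hasDerivAt_id t).const_sub (r ^ 2)).pow 2
      refine this.congr_deriv ?_
      simp
    have hder2 : ∀ t : ℝ, HasDerivAt (fun t : ℝ => -2 * (r ^ 2 - t)) 2 t := fun t => by
      have := ((hasDerivAt_id t).const_sub (r ^ 2)).const_mul (-2)
      refine this.congr_deriv ?_
      simp
    have hGder : ∀ t : ℝ, HasDerivAt (fun t : ℝ => L * t ^ 2 - K * t) (2 * L * t - K) t := fun t => by
      have := (((hasDerivAt_id t).pow 2).const_mul L).sub ((hasDerivAt_id t).const_mul K)
      refine this.congr_deriv ?_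
      simp; ring
    have hGder2 : ∀ t : ℝ, HasDerivAt (fun t : ℝ => 2 * L * t - K) (2 * L) t := fun t => by
      have := ((hasDerivAt_id t).const_mul (2 * L)).sub_const K
      refine this.congr_deriv ?_
      simp
    have pφ : ∀ i, pd i φ2 z = -4 * φ * (z i - a i) := fun i => by
      rw [hφ2, pd_comp i (c2_diff (sqd_contDiff a).contDiffAt) (hder _), pd_sqd]; ring
    have pG : ∀ i, pd i G z = (2 * L * u z - K) * pd i u z := fun i =>
      pd_comp i (c2_diff (huC z hz)) (hGder _)
    have lφ : lap φ2 z = -4 * n * φ + 8 * sqd a z := by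
      rw [hφ2, lap_comp (sqd_contDiff a).contDiffAt (Eventually.of_forall hder) (hder2 _),
        lap_sqd, sum_pd_sqd]; ring
    have lG : lap G z = (2 * L * u z - K) * (-v z) + 2 * L * ∑ i, pd i u z ^ 2 := by
      rw [show G = fun y => (fun t : ℝ => L * t ^ 2 - K * t) (u y) from rfl,
        lap_comp (huC z hz) (Eventually.of_forall hGder) (hGder2 _)]
      simp [hvdef]
    have lv : lap v z = -lap (lap u) z := by
      rw [hvdef, lap_const_mul (lap_contDiffAt (hC z hz))]; ring
    have grad : ∀ i, φ ^ 2 * pd i v z = 4 * φ * v z * (z i - a i)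
        + (K - 2 * L * u z) * pd i u z := fun i => by
      have h1 := pd_localMax i hloc
      rw [hP, pd_add i ((c2_diff hφC.contDiffAt).fun_mul (c2_diff (hvC z hz)))
        (c2_diff (hGC z hz)), pd_mul i (c2_diff hφC.contDiffAt) (c2_diff (hvC z hz)), pφ, pG] at h1
      have : φ2 z = φ ^ 2 := rfl
      rw [this] at h1
      linarith
    have hl := lap_localMax (hPC z hz) hloc
    rw [hP, lap_add (hφC.contDiffAt.mul (hvC z hz)) (hGC z hz),
      lap_mul hφC.contDiffAt (hvC z hz), lφ, lG, lv] at hl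
    simp only [pφ] at hl
    have hsum : ∑ i, -4 * φ * (z i - a i) * pd i v z
        = -4 * φ * ∑ i, (z i - a i) * pd i v z := by
      rw [Finset.mul_sum]; exact Finset.sum_congr rfl fun i _ => by ring
    rw [hsum] at hl
    refine int_alg (φ := φ) (q := sqd a z) (N := n) (K := K) (L := L) (u := u z) (k := k)
      (f := lap (lap u) z)
      (A := ∑ i, (z i - a i) * pd i v z) (B := ∑ i, (z i - a i) * pd i u z)
      (H := ∑ i, pd i u z ^ 2) (by linarith) (by linarith) hq0 hq hr (by positivity) hk hK hM0 hL
      (by simpa [hvdef] using hv z hz) (hu z hz) (huM z hz) (hf z hz) hM1 ?_ ?_ ?_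
    · rw [sqd_eq_sum, Finset.mul_sum, Finset.mul_sum, Finset.mul_sum, ← Finset.sum_add_distrib]
      refine Finset.sum_congr rfl fun i _ => ?_
      linear_combination (z i - a i) * grad i
    · have : 0 ≤ ∑ i, 2 * L * (pd i u z - 2 * (K - 2 * L * u z) * (z i - a i) / (L * φ)) ^ 2 :=
        Finset.sum_nonneg fun i _ => by positivity
      convert this using 1
      rw [sqd_eq_sum, Finset.mul_sum, Finset.mul_sum, Finset.mul_sum, Finset.sum_div,
        ← Finset.sum_sub_distrib, ← Finset.sum_add_distrib]
      refine Finset.sum_congr rfl fun i _ => ?_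
      have : φ ≠ 0 := by rw [hφ]; exact (sub_pos.2 hq').ne'
      field_simp
      ring
    · have : φ2 z = φ ^ 2 := rfl
      rw [this] at hl
      linarith
  have hPa : P a ≤ P z := hzmax ha
  have hPa' : r ^ 4 * (-lap u a) - K * M0 ≤ P a := by
    have h1 : φ2 a = r ^ 4 := by simp [hφ2, sqd]; ring
    have h2 := huM a ha
    have h3 : K * u a ≤ K * M0 := by gcongr
    have h4 : 0 ≤ L * u a ^ 2 := by positivity
    simp only [hP, h1, hvdef, hG]; linarith
  have : r ^ 4 * (-lap u a) ≤ r ^ 4 * ((16 * n + 256) * M0 / r ^ 2 + r ^ 2 * M1) := by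
    have : r ^ 4 * ((16 * n + 256) * M0 / r ^ 2 + r ^ 2 * M1)
      = (16 * n + 256) * M0 * r ^ 2 + r ^ 6 * M1 := by field_simp
    rw [this]
    rw [hK, hk] at hPa'
    nlinarith
  exact le_of_mul_le_mul_left this (by positivity)

/-- `-Δu = o(|x|^{2-n})` near the origin -/
lemma v_small {n : ℕ} {u : EuclideanSpace ℝ (Fin n) → ℝ} {M α : ℝ} (hM : 0 ≤ M) (hα : α < n)
    (hα0 : 0 ≤ α)
    (hC : ∀ x, ‖x‖ < 1 → x ≠ 0 → ContDiffAt ℝ 4 u x)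
    (hu : ∀ x, ‖x‖ < 1 → x ≠ 0 → 0 ≤ u x)
    (hv : ∀ x, ‖x‖ < 1 → x ≠ 0 → 0 ≤ -lap u x)
    (hf : ∀ x, ‖x‖ ≤ 3 / 4 → x ≠ 0 → lap (lap u) x ≤ M * ‖x‖ ^ (-α))
    (h4 : (4 : ℝ) ≤ n)
    (ho : ∀ ε > 0, ∀ᶠ x in 𝓝[≠] (0 : EuclideanSpace ℝ (Fin n)), u x ≤ ε * ‖x‖ ^ (4 - n : ℝ)) :
    ∀ ε > 0, ∀ᶠ x in 𝓝[≠] (0 : EuclideanSpace ℝ (Fin n)), -lap u x ≤ ε * ‖x‖ ^ (2 - n : ℝ) := by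
  intro ε hε
  obtain ⟨C1, hC1⟩ : ∃ C1 : ℝ, C1 = (16 * n + 256) * 4 * (1 / 2 : ℝ) ^ (4 - n : ℝ) := ⟨_, rfl⟩
  have hC1pos : 0 < C1 := by rw [hC1]; positivity
  obtain ⟨ε1, hε1⟩ : ∃ ε1 : ℝ, ε1 = ε / (2 * C1) := ⟨_, rfl⟩
  have hε1pos : 0 < ε1 := by rw [hε1]; positivity
  have ho1 := ho ε1 hε1pos
  rw [eventually_nhdsWithin_iff, Metric.eventually_nhds_iff] at ho1
  obtain ⟨δ, hδ, H⟩ := ho1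
  have hsm := ev_small (0 : EuclideanSpace ℝ (Fin n)) (γ := 2 - α) (δ := 2 - n) (by linarith)
    (M * (1 / 2 : ℝ) ^ (-α)) (half_pos hε)
  have hball : ∀ᶠ x in 𝓝[≠] (0 : EuclideanSpace ℝ (Fin n)), ‖x‖ < min (1 / 2) (δ / 2) := by
    refine nhdsWithin_le_nhds ?_
    refine continuous_norm.continuousAt.eventually (gt_mem_nhds ?_)
    simp; positivity
  filter_upwards [hsm, hball, self_mem_nhdsWithin] with a h1 h2 h3
  have ha0 : a ≠ 0 := h3
  have hap : 0 < ‖a‖ := norm_pos_iff.2 ha0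
  have ha1 : ‖a‖ < 1 / 2 := h2.trans_le (min_le_left _ _)
  have ha2 : ‖a‖ < δ / 2 := h2.trans_le (min_le_right _ _)
  have hx : ∀ x ∈ closedBall a (‖a‖ / 2), 1 / 2 * ‖a‖ ≤ ‖x‖ ∧ ‖x‖ ≤ 3 / 2 * ‖a‖ ∧ x ≠ 0 := by
    intro x hx
    rw [mem_closedBall, dist_eq_norm] at hx
    have i1 := norm_sub_norm_le a x
    have i2 := norm_sub_norm_le x a
    rw [norm_sub_rev] at i1
    have i3 : 1 / 2 * ‖a‖ ≤ ‖x‖ := by linarith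
    exact ⟨i3, by linarith, norm_pos_iff.1 (by linarith)⟩
  have hle : ∀ x ∈ closedBall a (‖a‖ / 2), ‖x‖ ≤ 3 / 4 := fun x h => by
    have := (hx x h).2.1; linarith
  have hmono : ∀ x ∈ closedBall a (‖a‖ / 2), ∀ e : ℝ, e ≤ 0 →
      ‖x‖ ^ e ≤ (1 / 2 : ℝ) ^ e * ‖a‖ ^ e := fun x h e he => by
    rw [← Real.mul_rpow (by norm_num) hap.le]
    exact Real.rpow_le_rpow_of_nonpos (by positivity) (hx x h).1 he
  have est := interior_est (u := u) (a := a) (r := ‖a‖ / 2)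
    (M0 := ε1 * ((1 / 2 : ℝ) ^ (4 - n : ℝ) * ‖a‖ ^ (4 - n : ℝ)))
    (M1 := M * ((1 / 2 : ℝ) ^ (-α) * ‖a‖ ^ (-α))) (by positivity) (by positivity) (by positivity)
    (fun x h => hC x (by linarith [hle x h]) (hx x h).2.2)
    (fun x h => hu x (by linarith [hle x h]) (hx x h).2.2)
    (fun x h => by
      have i1 := H (y := x) (by
        rw [dist_zero_right]; linarith [(hx x h).2.1]) (hx x h).2.2
      refine i1.trans ?_
      gcongr
      exact hmono x h _ (by linarith))
    (fun x h => hv x (by linarith [hle x h]) (hx x h).2.2)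
    (fun x h => (hf x (hle x h) (hx x h).2.2).trans (by
      gcongr
      exact hmono x h _ (by linarith)))
  refine est.trans ?_
  simp only [sub_zero] at h1
  have p1 : ‖a‖ ^ (4 - n : ℝ) = ‖a‖ ^ 2 * ‖a‖ ^ (2 - n : ℝ) := by
    rw [← Real.rpow_natCast, ← Real.rpow_add hap]; congr 1; push_cast; ring
  have p2 : ‖a‖ ^ (2 - α) = ‖a‖ ^ 2 * ‖a‖ ^ (-α) := by
    rw [← Real.rpow_natCast, ← Real.rpow_add hap]; congr 1
  have t1 : (16 * n + 256) * (ε1 * ((1 / 2 : ℝ) ^ (4 - n : ℝ) * ‖a‖ ^ (4 - n : ℝ))) / (‖a‖ / 2) ^ 2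
      = ε / 2 * ‖a‖ ^ (2 - n : ℝ) := by
    have : (16 * n + 256) * (ε1 * ((1 / 2 : ℝ) ^ (4 - n : ℝ) * ‖a‖ ^ (4 - n : ℝ))) / (‖a‖ / 2) ^ 2
      = C1 * ε1 * ‖a‖ ^ (2 - n : ℝ) := by
      rw [p1, hC1]; field_simp; try ring
    rw [this, hε1]; field_simp
  have t2 : (‖a‖ / 2) ^ 2 * (M * ((1 / 2 : ℝ) ^ (-α) * ‖a‖ ^ (-α))) ≤
      M * (1 / 2 : ℝ) ^ (-α) * ‖a‖ ^ (2 - α) := by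
    rw [p2]
    have : 0 ≤ M * (1 / 2 : ℝ) ^ (-α) * (‖a‖ ^ 2 * ‖a‖ ^ (-α)) := by positivity
    nlinarith
  rw [t1]
  linarith

lemma o4_o2 {n : ℕ} {u : EuclideanSpace ℝ (Fin n) → ℝ}
    (ho : ∀ ε > 0, ∀ᶠ x in 𝓝[≠] (0 : EuclideanSpace ℝ (Fin n)), u x ≤ ε * ‖x‖ ^ (4 - n : ℝ)) :
    ∀ ε > 0, ∀ᶠ x in 𝓝[≠] (0 : EuclideanSpace ℝ (Fin n)), u x ≤ ε * ‖x‖ ^ (2 - n : ℝ) := by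
  intro ε hε
  filter_upwards [ho 1 one_pos, ev_small (0 : EuclideanSpace ℝ (Fin n)) (γ := 4 - n) (δ := 2 - n)
    (by linarith) 1 hε] with x h1 h2
  simp only [sub_zero] at h2
  exact h1.trans h2

/-- gain of four powers -/
lemma improve {n : ℕ} {u : EuclideanSpace ℝ (Fin n) → ℝ} {M α : ℝ} (hM : 0 ≤ M) (hα : α < n)
    (hα4 : 4 < α)
    (hC : ∀ x, ‖x‖ < 1 → x ≠ 0 → ContDiffAt ℝ 4 u x)
    (hu : ∀ x, ‖x‖ < 1 → x ≠ 0 → 0 ≤ u x)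
    (hv : ∀ x, ‖x‖ < 1 → x ≠ 0 → 0 ≤ -lap u x)
    (hf : ∀ x, ‖x‖ ≤ 3 / 4 → x ≠ 0 → lap (lap u) x ≤ M * ‖x‖ ^ (-α))
    (ho : ∀ ε > 0, ∀ᶠ x in 𝓝[≠] (0 : EuclideanSpace ℝ (Fin n)), u x ≤ ε * ‖x‖ ^ (4 - n : ℝ)) :
    ∃ C, 0 ≤ C ∧ ∀ x, ‖x‖ ≤ 3 / 4 → x ≠ 0 → u x ≤ C * ‖x‖ ^ (4 - α) := by
  have hvs := v_small hM hα (by linarith) hC hu hv hf (by linarith) ho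
  have hone : ∀ x : EuclideanSpace ℝ (Fin n), ‖x‖ ≤ 3 / 4 → x ≠ 0 → ∀ e : ℝ, e ≤ 0 →
      1 ≤ ‖x‖ ^ e := fun x h1 h2 e he =>
    Real.one_le_rpow_of_pos_of_le_one_of_nonpos (norm_pos_iff.2 h2) (by linarith) he
  have hLC : ∀ x, ‖x‖ ≤ 3 / 4 → x ≠ 0 → ContDiffAt ℝ 2 (lap u) x := fun x h1 h2 =>
    lap_contDiffAt (hC x (by linarith) h2)
  obtain ⟨m, hm, H⟩ := compare (w := fun x => (-1) * lap u x) (R := 3 / 4) (M := M) (γ := 2 - α)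
    (fun x h1 h2 => contDiffAt_const.mul (hLC x h1 h2))
    (fun x h1 h2 => by
      rw [lap_const_mul (hLC x h1.le h2)]
      have := hf x h1.le h2
      rw [show 2 - α - 2 = -α by ring]
      linarith)
    (fun ε hε => by simpa using hvs ε hε) (by norm_num) (by linarith) (by linarith)
  obtain ⟨A, hA⟩ : ∃ A : ℝ, A = (M + 1) / -((2 - α) * (2 - α + n - 2)) := ⟨_, rfl⟩
  have hApos : 0 < A := by
    rw [hA]
    refine div_pos (by linarith) ?_
    have : 0 < (α - 2) * (n - α) := mul_pos (by linarith) (by linarith)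
    nlinarith
  rw [← hA] at H
  obtain ⟨m', hm', H'⟩ := compare (w := u) (R := 3 / 4) (M := m + A) (γ := 4 - α)
    (fun x h1 h2 => (hC x (by linarith) h2).of_le (by norm_num))
    (fun x h1 h2 => by
      have i1 := H x h1.le h2
      have i2 := hone x h1.le h2 (2 - α) (by linarith)
      rw [show 4 - α - 2 = 2 - α by ring]
      nlinarith)
    (o4_o2 ho) (by norm_num) (by linarith) (by linarith)
  obtain ⟨A', hA'⟩ : ∃ A' : ℝ, A' = (m + A + 1) / -((4 - α) * (4 - α + n - 2)) := ⟨_, rfl⟩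
  have hA'pos : 0 < A' := by
    rw [hA']
    refine div_pos (by linarith) ?_
    have : 0 < (α - 4) * (4 - α + n - 2) := mul_pos (by linarith) (by linarith)
    nlinarith
  rw [← hA'] at H'
  refine ⟨m' + A', by linarith, fun x h1 h2 => ?_⟩
  have i1 := H' x h1 h2
  have i2 := hone x h1 h2 (4 - α) (by linarith)
  nlinarith

/-- `-Δu` is bounded once `Δ²u = O(1/|x|)` -/
lemma v_bdd {n : ℕ} (hn : 5 ≤ n) {u : EuclideanSpace ℝ (Fin n) → ℝ} {M : ℝ} (hM : 0 ≤ M)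
    (hC : ∀ x, ‖x‖ < 1 → x ≠ 0 → ContDiffAt ℝ 4 u x)
    (hu : ∀ x, ‖x‖ < 1 → x ≠ 0 → 0 ≤ u x)
    (hv : ∀ x, ‖x‖ < 1 → x ≠ 0 → 0 ≤ -lap u x)
    (hf : ∀ x, ‖x‖ ≤ 3 / 4 → x ≠ 0 → lap (lap u) x ≤ M * ‖x‖ ^ (-1 : ℝ))
    (ho : ∀ ε > 0, ∀ᶠ x in 𝓝[≠] (0 : EuclideanSpace ℝ (Fin n)), u x ≤ ε * ‖x‖ ^ (4 - n : ℝ)) :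
    ∃ V, 0 ≤ V ∧ ∀ x, ‖x‖ ≤ 3 / 4 → x ≠ 0 → -lap u x ≤ V := by
  have hn' : (5 : ℝ) ≤ n := by exact_mod_cast hn
  have hvs := v_small hM (by linarith) (by linarith) hC hu hv hf (by linarith) ho
  have hLC : ∀ x, ‖x‖ ≤ 3 / 4 → x ≠ 0 → ContDiffAt ℝ 2 (lap u) x := fun x h1 h2 =>
    lap_contDiffAt (hC x (by linarith) h2)
  obtain ⟨m, hm, H⟩ := compare (w := fun x => (-1) * lap u x) (R := 3 / 4) (M := M) (γ := 1)
    (fun x h1 h2 => contDiffAt_const.mul (hLC x h1 h2))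
    (fun x h1 h2 => by
      rw [lap_const_mul (hLC x h1.le h2)]
      have := hf x h1.le h2
      rw [show (1 : ℝ) - 2 = -1 by norm_num]
      linarith)
    (fun ε hε => by simpa using hvs ε hε) (by norm_num) (by linarith) (by norm_num)
  refine ⟨m, hm, fun x h1 h2 => ?_⟩
  have i1 := H x h1 h2
  have : (M + 1) / -((1 : ℝ) * (1 + n - 2)) ≤ 0 :=
    div_nonpos_of_nonneg_of_nonpos (by linarith) (by linarith)
  have i3 : (M + 1) / -((1 : ℝ) * (1 + n - 2)) * ‖x‖ ^ (1 : ℝ) ≤ 0 :=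
    mul_nonpos_of_nonpos_of_nonneg this (by positivity)
  linarith

/-- uniform continuity near the origin -/
lemma unif {n : ℕ} (hn : 5 ≤ n) {u : EuclideanSpace ℝ (Fin n) → ℝ} {V : ℝ} (hV : 0 ≤ V)
    (hC : ∀ x, ‖x‖ < 1 → x ≠ 0 → ContDiffAt ℝ 4 u x)
    (hu : ∀ x, ‖x‖ < 1 → x ≠ 0 → 0 ≤ u x)
    (hv : ∀ x, ‖x‖ < 1 → x ≠ 0 → 0 ≤ -lap u x)
    (hvV : ∀ x, ‖x‖ ≤ 3 / 4 → x ≠ 0 → -lap u x ≤ V)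
    (ho : ∀ ε > 0, ∀ᶠ x in 𝓝[≠] (0 : EuclideanSpace ℝ (Fin n)), u x ≤ ε * ‖x‖ ^ (2 - n : ℝ)) :
    ∀ η > 0, ∃ δ > 0, ∀ x y, ‖x‖ < 1 / 2 → ‖y‖ < 1 / 2 → x ≠ 0 → y ≠ 0 → dist x y < δ →
      u y - u x < η := by
  intro η hη
  have hn' : (5 : ℝ) ≤ n := by exact_mod_cast hn
  obtain ⟨κ, hκ⟩ : ∃ κ : ℝ, κ = η / 4 := ⟨_, rfl⟩
  have hκp : 0 < κ := by rw [hκ]; positivity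
  obtain ⟨ρ, hρ, hρ2, hρV⟩ : ∃ ρ : ℝ, 0 < ρ ∧ ρ ≤ 1 / 2 ∧ V * ρ ≤ κ := by
    refine ⟨min (1 / 2) (κ / (V + 1)), by positivity, min_le_left _ _, ?_⟩
    calc V * min (1 / 2) (κ / (V + 1)) ≤ V * (κ / (V + 1)) := by gcongr; exact min_le_right _ _
      _ ≤ κ := by
        rw [mul_div_assoc', div_le_iff₀ (by linarith)]; nlinarith
  set K : Set (EuclideanSpace ℝ (Fin n)) := closedBall 0 (3 / 4) \ ball 0 (ρ / 2) with hK
  have hKc : IsCompact K := (isCompact_closedBall 0 _).diff isOpen_ball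
  have hKm : ∀ x, x ∈ K ↔ ‖x‖ ≤ 3 / 4 ∧ ρ / 2 ≤ ‖x‖ := fun x => by simp [hK]
  have hKne : ∀ x ∈ K, x ≠ 0 := fun x hx => norm_pos_iff.1 (by linarith [((hKm x).1 hx).2])
  have hKC : ∀ x ∈ K, ContDiffAt ℝ 4 u x := fun x hx =>
    hC x (by linarith [((hKm x).1 hx).1]) (hKne x hx)
  have uc1 := hKc.uniformContinuousOn_of_continuous (f := u) fun x hx =>
    (hKC x hx).continuousAt.continuousWithinAt
  have uc2 := hKc.uniformContinuousOn_of_continuous (f := lap u) fun x hx =>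
    (lap_contDiffAt (hKC x hx)).continuousAt.continuousWithinAt
  rw [Metric.uniformContinuousOn_iff] at uc1 uc2
  obtain ⟨δ1, hδ1, H1⟩ := uc1 κ hκp
  obtain ⟨δ2, hδ2, H2⟩ := uc2 κ hκp
  refine ⟨min (ρ / 2) (min δ1 δ2), by positivity, fun x y hx hy hx0 hy0 hxy => ?_⟩
  have hxy1 : dist x y < ρ / 2 := hxy.trans_le (min_le_left _ _)
  have hxy2 : dist x y < δ1 := hxy.trans_le ((min_le_right _ _).trans (min_le_left _ _))
  have hxy3 : dist x y < δ2 := hxy.trans_le ((min_le_right _ _).trans (min_le_right _ _))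
  by_cases hne : x = y
  · rw [hne, sub_self]; exact hη
  set e := y - x with he
  have he0 : e ≠ 0 := sub_ne_zero.2 (Ne.symm hne)
  have hen : dist x y = ‖e‖ := by rw [dist_comm, dist_eq_norm]
  rw [hen] at hxy1 hxy2 hxy3
  have hze : ∀ z : EuclideanSpace ℝ (Fin n), ‖z‖ ≤ 1 / 2 → ‖z + e‖ ≤ 3 / 4 := fun z hz => by
    have := norm_add_le z e; linarith
  have hze' : ∀ z : EuclideanSpace ℝ (Fin n), ‖z‖ - ‖e‖ ≤ ‖z + e‖ := fun z => by
    have := norm_sub_norm_le z (-e); rwa [sub_neg_eq_add, norm_neg] at this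
  have hdz : ∀ z : EuclideanSpace ℝ (Fin n), dist (z + e) z = ‖e‖ := fun z => by
    simp [dist_eq_norm]
  have hne' : ∀ z : EuclideanSpace ℝ (Fin n), z ≠ -e → z + e ≠ 0 := fun z hz h =>
    hz (eq_neg_of_add_eq_zero_left h)
  have hzK : ∀ z : EuclideanSpace ℝ (Fin n), ‖z‖ ≤ 1 / 2 → ρ ≤ ‖z‖ → z ∈ K ∧ z + e ∈ K := by
    intro z h1 h2
    rw [hKm, hKm]
    exact ⟨⟨by linarith, by linarith⟩, hze z h1, by linarith [hze' z]⟩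
  have cu : ∀ z, ‖z‖ ≤ 1 / 2 → z ≠ 0 → ContDiffAt ℝ 2 u z := fun z h1 h2 =>
    (hC z (by linarith) h2).of_le (by norm_num)
  have cue : ∀ z, ‖z‖ ≤ 1 / 2 → z ≠ -e → ContDiffAt ℝ 2 (fun z => u (z + e)) z := fun z h1 h2 => by
    have h3 : ContDiffAt ℝ 2 u (z + e) :=
      (hC (z + e) (by linarith [hze z h1]) (hne' z h2)).of_le (by norm_num)
    exact h3.comp z (contDiffAt_id.add contDiffAt_const)
  set w : EuclideanSpace ℝ (Fin n) → ℝ :=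
    fun z => (u (z + e) + (-1) * u z) + κ * ‖z - 0‖ ^ (1 : ℝ) with hw
  have hx' : x ≠ -e := fun h => hy0 (by
    have : y = x + e := by rw [he]; abel
    rw [this, h]; simp)
  have key : w x ≤ 2 * κ := by
    refine sing_max (R := 1 / 2) (b := -e) (by linarith) ?_ ?_ ?_ ?_ ?_ x hx.le hx0 hx'
    · intro z h1 h2 h3
      exact ((cue z h1 h3).add (contDiffAt_const.mul (cu z h1 h2))).add
        (contDiffAt_const.mul (npow_contDiffAt h2 1))
    · intro z h1 h2 h3
      rw [hw, lap_add ((cue z h1.le h3).add (contDiffAt_const.mul (cu z h1.le h2)))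
        (contDiffAt_const.mul (npow_contDiffAt h2 1)),
        lap_add (cue z h1.le h3) (contDiffAt_const.mul (cu z h1.le h2)),
        lap_const_mul (cu z h1.le h2), lap_const_mul (npow_contDiffAt h2 1), lap_npow h2,
        lap_translate]
      have hzp : 0 < ‖z‖ := norm_pos_iff.2 h2
      have e1 : ‖z - 0‖ ^ ((1 : ℝ) - 2) = 1 / ‖z‖ := by
        rw [sub_zero, show (1 : ℝ) - 2 = -1 by norm_num, Real.rpow_neg_one, one_div]
      rw [e1]
      have e2 : κ * 4 / ‖z‖ ≤ κ * (1 * (1 + n - 2) * (1 / ‖z‖)) := by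
        rw [mul_div_assoc, div_eq_mul_one_div (4 : ℝ)]
        gcongr; linarith
      refine lt_of_lt_of_le ?_ (add_le_add le_rfl e2)
      rcases lt_or_ge ‖z‖ ρ with hzρ | hzρ
      · have i1 := hvV (z + e) (hze z h1.le) (hne' z h3)
        have i2 := hv z (by linarith) h2
        have i3 : V < κ * 4 / ‖z‖ := by
          rw [lt_div_iff₀ hzp]
          have : V * ‖z‖ ≤ V * ρ := by gcongr
          linarith
        linarith
      · obtain ⟨k1, k2⟩ := hzK z h1.le hzρ
        have i1 := H2 (z + e) k2 z k1 (by rw [hdz]; exact hxy3)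
        rw [Real.dist_eq, abs_lt] at i1
        have i3 : κ < κ * 4 / ‖z‖ := by
          rw [lt_div_iff₀ hzp]; nlinarith
        linarith [i1.1]
    · intro z h1 h2 h3
      obtain ⟨k1, k2⟩ := hzK z h1.le (by linarith)
      have i1 := H1 (z + e) k2 z k1 (by rw [hdz]; exact hxy2)
      rw [Real.dist_eq, abs_lt] at i1
      simp only [hw, sub_zero, Real.rpow_one, h1]
      linarith [i1.2]
    · intro ε hε
      have c1 : ContinuousAt (fun z => u (z + e) + κ * ‖z‖) 0 := by
        have := (cue 0 (by norm_num) (by simpa [eq_comm] using he0)).continuousAt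
        exact this.add (by fun_prop)
      have c2 : ∀ᶠ z in 𝓝[≠] (0 : EuclideanSpace ℝ (Fin n)),
          u (z + e) + κ * ‖z‖ < u (0 + e) + κ * ‖(0 : EuclideanSpace ℝ (Fin n))‖ + 1 :=
        nhdsWithin_le_nhds (c1.eventually (gt_mem_nhds (by linarith)))
      have c3 : ∀ᶠ z in 𝓝[≠] (0 : EuclideanSpace ℝ (Fin n)), ‖z‖ < 1 := nhdsWithin_le_nhds
        (continuous_norm.continuousAt.eventually (gt_mem_nhds (by simp)))
      filter_upwards [c2, c3, self_mem_nhdsWithin, ev_small (0 : EuclideanSpace ℝ (Fin n))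
        (γ := 0) (δ := 2 - n) (by linarith)
        (u (0 + e) + κ * ‖(0 : EuclideanSpace ℝ (Fin n))‖ + 1) hε] with z h1 h2 h3 h4
      rw [Real.rpow_zero, mul_one] at h4
      have := hu z h2 h3
      refine le_trans ?_ h4
      simp only [hw, sub_zero, Real.rpow_one]
      linarith
    · intro ε hε
      have t : Tendsto (fun z : EuclideanSpace ℝ (Fin n) => z + e) (𝓝[≠] (-e)) (𝓝[≠] 0) := by
        refine tendsto_nhdsWithin_iff.2 ⟨?_, ?_⟩
        · have : Continuous fun z : EuclideanSpace ℝ (Fin n) => z + e := by fun_prop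
          have := this.tendsto (-e)
          rw [neg_add_cancel] at this
          exact this.mono_left nhdsWithin_le_nhds
        · filter_upwards [self_mem_nhdsWithin] with z hz using hne' z hz
      have c3 : ∀ᶠ z in 𝓝[≠] (-e), ‖z‖ < 1 := nhdsWithin_le_nhds
        (continuous_norm.continuousAt.eventually (gt_mem_nhds (by simp only [norm_neg]; linarith)))
      have c4 : ∀ᶠ z in 𝓝[≠] (-e), z ≠ 0 := nhdsWithin_le_nhds
        (isOpen_ne.mem_nhds (by simpa using he0))
      filter_upwards [t.eventually (ho (ε / 2) (half_pos hε)), c3, c4,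
        ev_small (-e) (γ := 0) (δ := 2 - n) (by linarith) κ (half_pos hε)] with z h1 h2 h3 h4
      rw [Real.rpow_zero, mul_one] at h4
      rw [sub_neg_eq_add] at h4 ⊢
      have := hu z h2 h3
      have : κ * ‖z‖ ≤ κ := by nlinarith
      simp only [hw, sub_zero, Real.rpow_one]
      linarith
  have hxe : x + e = y := by rw [he]; abel
  simp only [hw, hxe, sub_zero, Real.rpow_one] at key
  have : 0 ≤ κ * ‖x‖ := by positivity
  linarith

/-- uniform continuity near the origin gives an extension -/
lemma extend {n : ℕ} (hn : 5 ≤ n) {u : EuclideanSpace ℝ (Fin n) → ℝ}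
    (hC : ∀ x, ‖x‖ < 1 → x ≠ 0 → ContDiffAt ℝ 4 u x)
    (h : ∀ η > 0, ∃ δ > 0, ∀ x y, ‖x‖ < 1 / 2 → ‖y‖ < 1 / 2 → x ≠ 0 → y ≠ 0 → dist x y < δ →
      u y - u x < η) :
    ∃ g : EuclideanSpace ℝ (Fin n) → ℝ,
      ContinuousOn g (Metric.ball (0 : EuclideanSpace ℝ (Fin n)) 1) ∧
      ∀ x ∈ Metric.ball (0 : EuclideanSpace ℝ (Fin n)) 1 \ {0}, g x = u x := by
  have : Nonempty (Fin n) := ⟨⟨0, by omega⟩⟩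
  have : Nontrivial (EuclideanSpace ℝ (Fin n)) := inferInstance
  have : (𝓝[≠] (0 : EuclideanSpace ℝ (Fin n))).NeBot :=
    Module.punctured_nhds_neBot ℝ _ 0
  have hcau : Cauchy (map u (𝓝[≠] (0 : EuclideanSpace ℝ (Fin n)))) := by
    rw [Metric.cauchy_iff]
    refine ⟨inferInstance, fun η hη => ?_⟩
    obtain ⟨δ, hδ, H⟩ := h η hη
    refine ⟨u '' (ball 0 (min (1 / 2) (δ / 2)) \ {0}), image_mem_map ?_, ?_⟩
    · exact sdiff_mem_nhdsWithin_compl (ball_mem_nhds _ (by positivity)) _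
    · rintro _ ⟨x, ⟨hx, hx0⟩, rfl⟩ _ ⟨y, ⟨hy, hy0⟩, rfl⟩
      rw [mem_ball_zero_iff, lt_min_iff] at hx hy
      have hd : dist x y < δ := by
        have := norm_sub_le x y
        rw [dist_eq_norm]; linarith [hx.2, hy.2]
      have i1 := H x y hx.1 hy.1 hx0 hy0 hd
      have i2 := H y x hy.1 hx.1 hy0 hx0 (by rwa [dist_comm])
      rw [Real.dist_eq, abs_lt]
      constructor <;> linarith
  obtain ⟨l, hl⟩ := cauchy_map_iff_exists_tendsto.1 hcau
  refine ⟨Function.update u 0 l, fun x hx => ?_, fun x hx => ?_⟩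
  · by_cases hx0 : x = 0
    · rw [hx0]
      exact (continuousAt_update_same.2 hl).continuousWithinAt
    · refine ContinuousAt.continuousWithinAt ?_
      rw [continuousAt_update_of_ne hx0]
      exact (hC x (by simpa using hx) hx0).continuousAt
  · exact Function.update_of_ne hx.2 _ _

lemma vnorm_nonneg {n p : ℕ} (U : Fin p → EuclideanSpace ℝ (Fin n) → ℝ)
    (x : EuclideanSpace ℝ (Fin n)) : 0 ≤ vnorm U x := Real.sqrt_nonneg _

lemma le_vnorm {n p : ℕ} (U : Fin p → EuclideanSpace ℝ (Fin n) → ℝ)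
    (x : EuclideanSpace ℝ (Fin n)) (i : Fin p) : U i x ≤ vnorm U x := by
  refine Real.le_sqrt_of_sq_le ?_
  exact Finset.single_le_sum (f := fun i => U i x ^ 2) (fun j _ => sq_nonneg _) (Finset.mem_univ i)

lemma vnorm_le_sum {n p : ℕ} (U : Fin p → EuclideanSpace ℝ (Fin n) → ℝ)
    (x : EuclideanSpace ℝ (Fin n)) (h : ∀ i, 0 ≤ U i x) : vnorm U x ≤ ∑ i, U i x := by
  refine Real.sqrt_le_iff.2 ⟨Finset.sum_nonneg fun i _ => h i, ?_⟩
  exact Finset.sum_sq_le_sq_sum_of_nonneg fun i _ => h i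

/-- removability of the singularity in the Serrin–Lions range
`1 < s < n/(n-4)` when `|U(x)| = o(|x|^{4-n})` as `x → 0`. -/
theorem statement17 (n p : ℕ) (hn : 5 ≤ n) (hp : 1 ≤ p) (s : ℝ)
    (hs1 : 1 < s) (hs2 : s < (n : ℝ) / ((n : ℝ) - 4))
    (U : Fin p → EuclideanSpace ℝ (Fin n) → ℝ)
    (hnonneg : ∀ i, ∀ x ∈ Metric.ball (0 : EuclideanSpace ℝ (Fin n)) 1 \ {0}, 0 ≤ U i x)
    (hC4 : ∀ i, ContDiffOn ℝ 4 (U i)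
      (Metric.ball (0 : EuclideanSpace ℝ (Fin n)) 1 \ {0}))
    (hsuper : ∀ i, ∀ x ∈ Metric.ball (0 : EuclideanSpace ℝ (Fin n)) 1 \ {0},
      0 < -lap (U i) x)
    (hpde : ∀ i, ∀ x ∈ Metric.ball (0 : EuclideanSpace ℝ (Fin n)) 1 \ {0},
      bilap (U i) x = (vnorm U x) ^ (s - 1) * U i x)
    (hlittleo : Tendsto
      (fun x : EuclideanSpace ℝ (Fin n) => ‖x‖ ^ ((n : ℝ) - 4) * vnorm U x)
      (𝓝[Metric.ball (0 : EuclideanSpace ℝ (Fin n)) 1 \ {0}] 0) (𝓝 0)) :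
    ∀ i, ∃ g : EuclideanSpace ℝ (Fin n) → ℝ,
      ContinuousOn g (Metric.ball (0 : EuclideanSpace ℝ (Fin n)) 1) ∧
      ∀ x ∈ Metric.ball (0 : EuclideanSpace ℝ (Fin n)) 1 \ {0}, g x = U i x := by
  have hn' : (5 : ℝ) ≤ n := by exact_mod_cast hn
  have hmem : ∀ x : EuclideanSpace ℝ (Fin n), ‖x‖ < 1 → x ≠ 0 →
      x ∈ Metric.ball (0 : EuclideanSpace ℝ (Fin n)) 1 \ {0} := fun x h1 h2 =>
    ⟨by simpa using h1, h2⟩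
  have hopen : IsOpen (Metric.ball (0 : EuclideanSpace ℝ (Fin n)) 1 \ {0}) :=
    isOpen_ball.sdiff isClosed_singleton
  have hC : ∀ i x, ‖x‖ < 1 → x ≠ 0 → ContDiffAt ℝ 4 (U i) x := fun i x h1 h2 =>
    (hC4 i).contDiffAt (hopen.mem_nhds (hmem x h1 h2))
  have hu : ∀ i x, ‖x‖ < 1 → x ≠ 0 → 0 ≤ U i x := fun i x h1 h2 => hnonneg i x (hmem x h1 h2)
  have hv : ∀ i x, ‖x‖ < 1 → x ≠ 0 → 0 ≤ -lap (U i) x := fun i x h1 h2 =>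
    (hsuper i x (hmem x h1 h2)).le
  have hnhds : 𝓝[Metric.ball (0 : EuclideanSpace ℝ (Fin n)) 1 \ {0}] 0 = 𝓝[≠] 0 := by
    rw [Set.sdiff_eq]
    exact nhdsWithin_inter_of_mem (nhdsWithin_le_nhds (ball_mem_nhds (0 : EuclideanSpace ℝ (Fin n)) one_pos))
  rw [hnhds] at hlittleo
  have hvo : ∀ ε > 0, ∀ᶠ x in 𝓝[≠] (0 : EuclideanSpace ℝ (Fin n)),
      vnorm U x ≤ ε * ‖x‖ ^ (4 - n : ℝ) := by
    intro ε hε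
    filter_upwards [hlittleo.eventually (gt_mem_nhds hε), self_mem_nhdsWithin] with x h1 h2
    have hx : 0 < ‖x‖ := norm_pos_iff.2 h2
    have h3 : ‖x‖ ^ ((n : ℝ) - 4) * ‖x‖ ^ (4 - n : ℝ) = 1 := by
      rw [← Real.rpow_add hx]; simp
    have h4 : 0 < ‖x‖ ^ (4 - n : ℝ) := by positivity
    calc vnorm U x = (‖x‖ ^ ((n : ℝ) - 4) * vnorm U x) * ‖x‖ ^ (4 - n : ℝ) := by
          linear_combination (-vnorm U x) * h3
      _ ≤ ε * ‖x‖ ^ (4 - n : ℝ) := by gcongr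
  have ho : ∀ i, ∀ ε > 0, ∀ᶠ x in 𝓝[≠] (0 : EuclideanSpace ℝ (Fin n)),
      U i x ≤ ε * ‖x‖ ^ (4 - n : ℝ) := fun i ε hε => by
    filter_upwards [hvo ε hε] with x hx using (le_vnorm U x i).trans hx
  have hvc : ∀ x, ‖x‖ < 1 → x ≠ 0 → ContinuousAt (vnorm U) x := fun x h1 h2 => by
    have : ContinuousAt (fun x => ∑ i, U i x ^ 2) x :=
      tendsto_finsetSum _ fun i _ => ((hC i x h1 h2).continuousAt.pow 2)
    exact Real.continuous_sqrt.continuousAt.comp this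
  -- growth claim
  let Claim : ℝ → Prop := fun β => ∃ C : ℝ, 0 ≤ C ∧ ∀ x : EuclideanSpace ℝ (Fin n),
    ‖x‖ ≤ 3 / 4 → x ≠ 0 → vnorm U x ≤ C * ‖x‖ ^ (-β)
  have hmono : ∀ β β', β ≤ β' → Claim β → Claim β' := by
    rintro β β' hββ ⟨C, hC0, H⟩
    refine ⟨C, hC0, fun x h1 h2 => (H x h1 h2).trans ?_⟩
    gcongr C * ?_
    exact Real.rpow_le_rpow_of_exponent_ge (norm_pos_iff.2 h2) (by linarith) (by linarith)
  have hbase : Claim (n - 4) := by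
    have h1 := hvo 1 one_pos
    rw [eventually_nhdsWithin_iff, Metric.eventually_nhds_iff] at h1
    obtain ⟨δ, hδ, H⟩ := h1
    have hKc : IsCompact (closedBall (0 : EuclideanSpace ℝ (Fin n)) (3 / 4) \ ball 0 δ) :=
      (isCompact_closedBall 0 _).diff isOpen_ball
    have hcont : ContinuousOn (vnorm U)
        (closedBall (0 : EuclideanSpace ℝ (Fin n)) (3 / 4) \ ball 0 δ) := fun x hx => by
      have h3 : ‖x‖ ≤ 3 / 4 := by simpa using hx.1
      have h4 : δ ≤ ‖x‖ := by simpa using hx.2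
      exact (hvc x (by linarith) (norm_pos_iff.1 (by linarith))).continuousWithinAt
    obtain ⟨m, hm⟩ := hKc.bddAbove_image hcont
    refine ⟨max m 1, le_trans zero_le_one (le_max_right _ _), fun x h1 h2 => ?_⟩
    have hone : 1 ≤ ‖x‖ ^ (-((n : ℝ) - 4)) :=
      Real.one_le_rpow_of_pos_of_le_one_of_nonpos (norm_pos_iff.2 h2) (by linarith) (by linarith)
    by_cases hx : ‖x‖ < δ
    · have := H (y := x) (by simpa using hx) h2
      rw [show (4 - n : ℝ) = -((n : ℝ) - 4) by ring] at this
      refine this.trans ?_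
      gcongr
      exact le_max_right _ _
    · have h3 : vnorm U x ≤ m := hm ⟨x, ⟨by simpa using h1, by simpa using hx⟩, rfl⟩
      calc vnorm U x ≤ max m 1 := h3.trans (le_max_left _ _)
        _ ≤ max m 1 * ‖x‖ ^ (-((n : ℝ) - 4)) :=
          le_mul_of_one_le_right (le_trans zero_le_one (le_max_right _ _)) hone
  -- bound for the right-hand side
  have hrhs : ∀ β, Claim β → ∃ M : ℝ, 0 ≤ M ∧ ∀ i x, ‖x‖ ≤ 3 / 4 → x ≠ 0 →
      lap (lap (U i)) x ≤ M * ‖x‖ ^ (-(β * s)) := by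
    rintro β ⟨C, hC0, H⟩
    refine ⟨C ^ s, by positivity, fun i x h1 h2 => ?_⟩
    have e := hpde i x (hmem x (by linarith) h2)
    have hx : 0 < ‖x‖ := norm_pos_iff.2 h2
    have hvn := vnorm_nonneg U x
    calc lap (lap (U i)) x = vnorm U x ^ (s - 1) * U i x := e
      _ ≤ vnorm U x ^ (s - 1) * vnorm U x := by gcongr; exact le_vnorm U x i
      _ = vnorm U x ^ s := by
          rw [← Real.rpow_add_one' hvn (by linarith)]; congr 1; ring
      _ ≤ (C * ‖x‖ ^ (-β)) ^ s := by gcongr; exact H x h1 h2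
      _ = C ^ s * ‖x‖ ^ (-(β * s)) := by
          rw [Real.mul_rpow hC0 (by positivity), ← Real.rpow_mul hx.le]; congr 2; ring
  have hstep : ∀ β1 β : ℝ, Claim β1 → 0 < β → β < (n : ℝ) - 4 → s * β1 ≤ β + 4 → Claim β := by
    intro β1 β hcl hβ hβn hle
    obtain ⟨M, hM, HM⟩ := hrhs β1 hcl
    have himp : ∀ i, ∃ C, 0 ≤ C ∧ ∀ x, ‖x‖ ≤ 3 / 4 → x ≠ 0 →
        U i x ≤ C * ‖x‖ ^ (4 - (β + 4)) := fun i =>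
      improve (α := β + 4) hM (by linarith) (by linarith) (hC i) (hu i) (hv i)
        (fun x h1 h2 => (HM i x h1 h2).trans (by
          gcongr M * ?_
          exact Real.rpow_le_rpow_of_exponent_ge (norm_pos_iff.2 h2) (by linarith)
            (by linarith))) (ho i)
    choose C hC0 HC using himp
    refine ⟨∑ i, C i, Finset.sum_nonneg fun i _ => hC0 i, fun x h1 h2 => ?_⟩
    refine (vnorm_le_sum U x fun i => hu i x (by linarith) h2).trans ?_
    rw [Finset.sum_mul]
    refine Finset.sum_le_sum fun i _ => ?_
    have := HC i x h1 h2
    rwa [show 4 - (β + 4) = -β by ring] at this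
  obtain ⟨κ, hκ⟩ : ∃ κ : ℝ, κ = n - s * (n - 4) := ⟨_, rfl⟩
  have hκp : 0 < κ := by
    rw [lt_div_iff₀ (by linarith)] at hs2
    linarith
  have hiter : ∀ k : ℕ, ∀ β, 0 < β → n - 4 - k * κ ≤ β → Claim β := by
    intro k
    induction k with
    | zero =>
      intro β _ h
      exact hmono _ _ (by simpa using h) hbase
    | succ k ih =>
      intro β hβ h
      push_cast at h
      rcases le_or_gt ((n : ℝ) - 4) β with h1 | h1
      · exact hmono _ _ h1 hbase
      rcases le_or_gt (β + κ) ((n : ℝ) - 4) with h2 | h2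
      · refine hstep (β + κ) β (ih _ (by linarith) (by linarith)) hβ h1 ?_
        nlinarith
      · exact hstep (n - 4) β hbase hβ h1 (by linarith)
  have hsmall : Claim (1 / s) := by
    obtain ⟨k, hk⟩ := exists_nat_ge (((n : ℝ) - 4) / κ)
    rw [div_le_iff₀ hκp] at hk
    have : 0 < 1 / s := by positivity
    exact hiter k _ this (by linarith)
  obtain ⟨M, hM, HM⟩ := hrhs _ hsmall
  rw [show 1 / s * s = 1 by field_simp] at HM
  intro i
  obtain ⟨V, hV, HV⟩ := v_bdd hn hM (hC i) (hu i) (hv i) (HM i) (ho i)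
  exact extend hn (hC i) (unif hn hV (hC i) (hu i) (hv i) HV (o4_o2 (ho i)))
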